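/- For every integer t ≥ 1 there exists a constant c_t such that for every graph G with no K_t minor and every ball hypergraph 𝓗 of G, the transversal number satisfies τ(𝓗) ≤ c_t · ν(𝓗), where ν(𝓗) is the matching number. -/

import Mathlib

/-- The ball of radius `r` centered at `v` in the graph metric of `G`:
all vertices `u` with `d_G(v,u) ≤ r` (in particular, `u` must be reachable from `v`). -/
def SimpleGraph.gBall {V : Type*} (G : SimpleGraph V) (v : V) (r : ℕ) : Set V :=
  {u | G.Reachable v u ∧ G.dist v u ≤ r}

/-- A ball hypergraph of `G` is given by its edge set `E`: a collection of subsets of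
`V(G)`, each of which is a ball of `G`. -/
def IsBallHypergraph {V : Type*} (G : SimpleGraph V) (E : Set (Set V)) : Prop :=
  ∀ e ∈ E, ∃ v r, e = G.gBall v r

/-- `H` is a minor of `G`: there are pairwise disjoint connected nonempty branch sets
in `G`, one for each vertex of `H`, with an edge of `G` between the branch sets of any
two adjacent vertices of `H`. -/
def GraphMinor {W : Type*} {V : Type*} (H : SimpleGraph W) (G : SimpleGraph V) : Prop :=
  ∃ f : W → Set V,
    (∀ w, (G.induce (f w)).Connected) ∧
    (Pairwise fun w₁ w₂ => Disjoint (f w₁) (f w₂)) ∧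
    (∀ w₁ w₂, H.Adj w₁ w₂ → ∃ u ∈ f w₁, ∃ v ∈ f w₂, G.Adj u v)

/-- The matching number of the hypergraph with edge set `E`: the maximum number of
pairwise disjoint edges. -/
noncomputable def matchingNumber {V : Type*} [Fintype V] (E : Set (Set V)) : ℕ :=
  sSup {n | ∃ M : Finset (Set V), ↑M ⊆ E ∧ (M : Set (Set V)).Pairwise Disjoint ∧ M.card = n}

/-- The transversal number of the hypergraph with edge set `E`: the minimum size of a
set of vertices meeting every edge. -/
noncomputable def transversalNumber {V : Type*} [Fintype V] (E : Set (Set V)) : ℕ :=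
  sInf {n | ∃ T : Finset V, (∀ e ∈ E, ∃ v ∈ T, v ∈ e) ∧ T.card = n}

/-! Balls of a graph without a `K_t` minor have sparse supports, in both the primal and the dual
sense. For sites `c i` with additive weights, contracting the weighted Voronoi cells yields a minor
of `G` on the index set, hence a graph with linearly many edges, and in this graph the sites within
weighted distance `ρ` of any vertex induce a connected subgraph. Constant weights make traces of
balls connected; weights decreasing in the radius do the same for the sets of inclusion-minimal
balls through a common vertex.

By Clarkson–Shor sampling, sparse supports bound the number of pairs that share a light set. On the
dual side this lets a greedy choice turn a fractional matching into a matching, up to a constant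
factor. On the primal side it gives nets of size independent of the ground set; applied inside a
maximal family of balls of comparable weight with small overlaps, whose size the dual supports
bound, these nets turn a fractional transversal into a transversal. Linear programming duality
joins the two. -/

open Finset

/-! ### Minors and edge density -/

section Minors

variable {V W X : Type*} {G : SimpleGraph V} {H : SimpleGraph W} {K : SimpleGraph X}

lemma connected_of_exists_adj_lt {α : Type*} [Preorder α] [WellFoundedLT α] (f : W → α) (w₀ : W)
    (h : ∀ w, w ≠ w₀ → ∃ u, H.Adj w u ∧ f u < f w) : H.Connected := by
  refine (SimpleGraph.connected_iff_exists_forall_reachable H).2 ⟨w₀, fun w => ?_⟩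
  induction w using (InvImage.wf f wellFounded_lt).induction with
  | _ w ih =>
  rcases eq_or_ne w w₀ with rfl | hw
  · exact .rfl
  · obtain ⟨u, hwu, hlt⟩ := h w hw
    exact (ih u hlt).trans hwu.symm.reachable

/-- A model of `H` as a minor of `G`: the branch sets `f` that witness `GraphMinor H G`. -/
structure IsMinorModel (H : SimpleGraph W) (G : SimpleGraph V) (f : W → Set V) : Prop where
  connected : ∀ w, (G.induce (f w)).Connected
  disjoint : Pairwise fun w₁ w₂ => Disjoint (f w₁) (f w₂)
  exists_adj : ∀ ⦃w₁ w₂⦄, H.Adj w₁ w₂ → ∃ u ∈ f w₁, ∃ v ∈ f w₂, G.Adj u v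

lemma graphMinor_iff_exists_isMinorModel : GraphMinor H G ↔ ∃ f, IsMinorModel H G f :=
  ⟨fun ⟨f, hc, hd, ha⟩ => ⟨f, hc, hd, fun w₁ w₂ => ha w₁ w₂⟩,
    fun ⟨f, hf⟩ => ⟨f, hf.connected, hf.disjoint, fun _ _ h => hf.exists_adj h⟩⟩

lemma connected_induce_biUnion {f : W → Set V} {T : Set W}
    (hf : ∀ w ∈ T, (G.induce (f w)).Connected)
    (hadj : ∀ w₁ w₂, H.Adj w₁ w₂ → ∃ u ∈ f w₁, ∃ v ∈ f w₂, G.Adj u v)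
    (hT : (H.induce T).Connected) : (G.induce (⋃ w ∈ T, f w)).Connected := by
  have hsub : ∀ w ∈ T, f w ⊆ ⋃ w ∈ T, f w := fun w hw => Set.subset_biUnion_of_mem hw
  have hcell : ∀ w (hw : w ∈ T) u (hu : u ∈ f w) v (hv : v ∈ f w),
      (G.induce (⋃ w ∈ T, f w)).Reachable ⟨u, hsub w hw hu⟩ ⟨v, hsub w hw hv⟩ :=
    fun w hw u hu v hv =>
      ((hf w hw).preconnected ⟨u, hu⟩ ⟨v, hv⟩).map (G.induceHomOfLE (hsub w hw)).toHom
  have hwalk : ∀ w₁ w₂ : T, (H.induce T).Reachable w₁ w₂ → ∀ u (hu : u ∈ f w₁) v (hv : v ∈ f w₂),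
      (G.induce (⋃ w ∈ T, f w)).Reachable ⟨u, hsub w₁ w₁.2 hu⟩ ⟨v, hsub w₂ w₂.2 hv⟩ := by
    rintro w₁ w₂ ⟨p⟩
    induction p with
    | nil => exact hcell _ (Subtype.prop _)
    | cons h _ ih =>
      intro u hu v hv
      obtain ⟨x, hx, y, hy, hxy⟩ := hadj _ _ h
      refine (hcell _ (Subtype.prop _) u hu x hx).trans (.trans ?_ (ih y hy v hv))
      exact SimpleGraph.Adj.reachable hxy
  obtain ⟨w⟩ := hT.nonempty
  obtain ⟨⟨u, hu⟩⟩ := (hf w w.2).nonempty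
  refine SimpleGraph.connected_iff_exists_forall_reachable _ |>.2
    ⟨⟨u, hsub w w.2 hu⟩, fun ⟨v, hv⟩ => ?_⟩
  obtain ⟨w', hw', hv'⟩ := Set.mem_iUnion₂.1 hv
  exact hwalk w ⟨w', hw'⟩ (hT.preconnected _ _) u hu v hv'

lemma IsMinorModel.comp {f : W → Set V} {g : X → Set W} (hf : IsMinorModel H G f)
    (hg : IsMinorModel K H g) : IsMinorModel K G fun x => ⋃ w ∈ g x, f w where
  connected x := connected_induce_biUnion (fun w _ => hf.connected w)
    (fun _ _ h => hf.exists_adj h) (hg.connected x)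
  disjoint x₁ x₂ hx := by
    simp only [Set.disjoint_iUnion_left, Set.disjoint_iUnion_right]
    intro w hw w' hw'
    exact hf.disjoint fun h => Set.disjoint_left.1 (hg.disjoint hx) (h ▸ hw') hw
  exists_adj x₁ x₂ hx := by
    obtain ⟨w₁, hw₁, w₂, hw₂, hw⟩ := hg.exists_adj hx
    obtain ⟨u, hu, v, hv, huv⟩ := hf.exists_adj hw
    exact ⟨u, Set.mem_biUnion hw₁ hu, v, Set.mem_biUnion hw₂ hv, huv⟩

lemma GraphMinor.trans (hKH : GraphMinor K H) (hHG : GraphMinor H G) : GraphMinor K G := by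
  obtain ⟨g, hg⟩ := graphMinor_iff_exists_isMinorModel.1 hKH
  obtain ⟨f, hf⟩ := graphMinor_iff_exists_isMinorModel.1 hHG
  exact graphMinor_iff_exists_isMinorModel.2 ⟨_, hf.comp hg⟩

lemma IsMinorModel.cons {t : ℕ} {f : Fin t → Set V} {U : Set V}
    (hf : IsMinorModel (⊤ : SimpleGraph (Fin t)) G f) (hU : (G.induce U).Connected)
    (hdisj : ∀ a, Disjoint U (f a)) (hadj : ∀ a, ∃ u ∈ U, ∃ v ∈ f a, G.Adj u v) :
    IsMinorModel (⊤ : SimpleGraph (Fin (t + 1))) G (Fin.cons U f) where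
  connected := Fin.cases hU hf.connected
  disjoint := by
    refine Fin.cases (Fin.cases (fun h => absurd rfl h) fun b _ => hdisj b) fun a => Fin.cases
      (fun _ => (hdisj a).symm) fun b hab => hf.disjoint fun h => hab (congrArg Fin.succ h)
  exists_adj := by
    refine Fin.cases (Fin.cases (fun h => absurd rfl h) fun b _ => hadj b) fun a => Fin.cases
      (fun _ => ?_) fun b hab => hf.exists_adj fun h => hab (congrArg Fin.succ h)
    obtain ⟨u, hu, v, hv, huv⟩ := hadj a
    exact ⟨v, hv, u, hu, huv.symm⟩

/-- The graph on the index set of a family `A` of vertex sets of `G` in which two distinct indices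
are adjacent when `G` has an edge between their sets: the quotient obtained by contracting the sets
`A i` and deleting all other vertices. -/
def touchingGraph (G : SimpleGraph V) (A : W → Set V) : SimpleGraph W where
  Adj i j := i ≠ j ∧ ∃ u ∈ A i, ∃ v ∈ A j, G.Adj u v
  symm := ⟨fun _ _ ⟨hij, u, hu, v, hv, huv⟩ => ⟨hij.symm, v, hv, u, hu, huv.symm⟩⟩
  loopless := ⟨fun _ h => h.1 rfl⟩

lemma graphMinor_touchingGraph {A : W → Set V} (hconn : ∀ i, (G.induce (A i)).Connected)
    (hdisj : Pairwise fun i j => Disjoint (A i) (A j)) : GraphMinor (touchingGraph G A) G :=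
  ⟨A, hconn, hdisj, fun _ _ h => h.2⟩

end Minors

section Density

variable {V : Type*} {G : SimpleGraph V}

lemma connected_induce_insert {U : Set V} {u v : V} (hU : (G.induce U).Connected) (hu : u ∈ U)
    (huv : G.Adj u v) : (G.induce (insert v U)).Connected := by
  rw [Set.insert_eq, Set.union_comm]
  exact SimpleGraph.connected_induce_union hU.preconnected .of_subsingleton hu rfl huv

variable [DecidableRel G.Adj]

lemma card_interedges_eq_sum (S T : Finset V) :
    #(G.interedges S T) = ∑ v ∈ S, #{u ∈ T | G.Adj v u} := by
  rw [SimpleGraph.interedges_def, card_filter, sum_product]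
  simp only [card_filter]

variable [DecidableEq V]

lemma card_interedges_insert {S : Finset V} {v : V} (hv : v ∉ S) :
    #(G.interedges (insert v S) (insert v S)) =
      #(G.interedges S S) + 2 * #{u ∈ S | G.Adj v u} := by
  have hsplit : ∀ w, #{u ∈ insert v S | G.Adj w u} =
      (if G.Adj w v then 1 else 0) + #{u ∈ S | G.Adj w u} := by
    intro w
    rw [filter_insert]
    split_ifs with h
    · rw [card_insert_of_notMem fun h' => hv (mem_filter.1 h').1, add_comm]
    · rw [zero_add]
  have hcol : ∑ w ∈ S, (if G.Adj w v then 1 else 0) = #{u ∈ S | G.Adj v u} := by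
    simp only [card_filter, G.adj_comm v]
  rw [card_interedges_eq_sum, card_interedges_eq_sum, sum_insert hv]
  simp only [hsplit, sum_add_distrib, hcol, SimpleGraph.irrefl, if_false]
  ring

/-- The neighbours of `U` in `S \ U`. -/
def outerBoundary (G : SimpleGraph V) [DecidableRel G.Adj] (S U : Finset V) : Finset V :=
  {v ∈ S \ U | ∃ u ∈ U, G.Adj u v}

/-- Twice the number of edges of the simple graph obtained from `G[S]` by contracting `U` to a
single vertex. -/
def contractDartCount (G : SimpleGraph V) [DecidableRel G.Adj] (S U : Finset V) : ℕ :=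
  2 * #(outerBoundary G S U) + #(G.interedges (S \ U) (S \ U))

lemma mem_outerBoundary {S U : Finset V} {v : V} :
    v ∈ outerBoundary G S U ↔ (v ∈ S ∧ v ∉ U) ∧ ∃ u ∈ U, G.Adj u v := by
  rw [outerBoundary, mem_filter, mem_sdiff]

lemma contractDartCount_singleton {S : Finset V} {x : V} (hx : x ∈ S) :
    contractDartCount G S {x} = #(G.interedges S S) := by
  have h := card_interedges_insert (G := G) (notMem_erase x S)
  rw [insert_erase hx] at h
  simp only [contractDartCount, outerBoundary, sdiff_singleton_eq_erase, mem_singleton,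
    exists_eq_left, h, add_comm]

/-- Contracting the edge to a boundary vertex `v` loses that edge and one edge for every common
neighbour of `v` and the contracted vertex. -/
lemma contractDartCount_le_insert {S U : Finset V} {v : V} (hv : v ∈ outerBoundary G S U) :
    contractDartCount G S U ≤ contractDartCount G S (insert v U) +
      2 * (1 + #{w ∈ outerBoundary G S U | G.Adj v w}) := by
  obtain ⟨⟨hvS, hvU⟩, -⟩ := mem_outerBoundary.1 hv
  set R := S \ insert v U with hR
  set A := {u ∈ R | G.Adj v u} with hA
  set N := outerBoundary G S U with hN
  have hSU : S \ U = insert v R := by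
    rw [hR, sdiff_insert, insert_erase (mem_sdiff.2 ⟨hvS, hvU⟩)]
  have hedges : #(G.interedges (S \ U) (S \ U)) = #(G.interedges R R) + 2 * #A := by
    rw [hSU, card_interedges_insert (by simp [hR])]
  have hsub : N.erase v ∪ A \ N ⊆ outerBoundary G S (insert v U) := by
    intro y
    simp only [hA, hN, hR, mem_union, mem_erase, mem_sdiff, mem_filter, mem_outerBoundary,
      mem_insert]
    grind
  have hcard : #N - 1 + #(A \ N) ≤ #(outerBoundary G S (insert v U)) := by
    rw [← card_erase_of_mem hv, ← card_union_of_disjoint]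
    · exact card_le_card hsub
    · exact disjoint_sdiff.mono_left (erase_subset v N)
  have hcommon : #(A ∩ N) ≤ #{w ∈ N | G.Adj v w} := by
    refine card_le_card fun y hy => ?_
    obtain ⟨hyA, hyN⟩ := mem_inter.1 hy
    exact mem_filter.2 ⟨hyN, (mem_filter.1 hyA).2⟩
  have hsplit := card_sdiff_add_card_inter A N
  simp only [contractDartCount, ← hN, hedges, ← hR]
  omega

/-- Contract edges while the average degree stays at least `2 * c`; contracting the edge to a
boundary vertex with fewer than `c` neighbours in the boundary would be a further such step. -/
lemma exists_connected_forall_le_card_outerBoundary {c : ℕ} (hc : 0 < c) {S : Finset V}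
    (hS : S.Nonempty) (hdense : 2 * c * #S ≤ #(G.interedges S S))
    (hmin : ∀ R ⊂ S, R.Nonempty → #(G.interedges R R) < 2 * c * #R) :
    ∃ U ⊆ S, (G.induce (U : Set V)).Connected ∧ (outerBoundary G S U).Nonempty ∧
      ∀ v ∈ outerBoundary G S U, c ≤ #{w ∈ outerBoundary G S U | G.Adj v w} := by
  obtain ⟨x, hx⟩ := hS
  let P : Finset V → Prop := fun U => U ⊆ S ∧ (G.induce (U : Set V)).Connected ∧
    2 * c * (#(S \ U) + 1) ≤ contractDartCount G S U
  have hPx : P {x} := by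
    refine ⟨singleton_subset_iff.2 hx, ?_, ?_⟩
    · rw [coe_singleton]
      exact SimpleGraph.connected_iff _ |>.2 ⟨.of_subsingleton, ⟨⟨x, rfl⟩⟩⟩
    · rwa [contractDartCount_singleton hx, sdiff_singleton_eq_erase, card_erase_add_one hx]
  have hfin : {U | P U}.Finite :=
    (finite_toSet S.powerset).subset fun U hU => mem_coe.2 (mem_powerset.2 hU.1)
  obtain ⟨U, ⟨hUS, hUc, hUd⟩, hmax⟩ := hfin.exists_maximal ⟨{x}, hPx⟩
  refine ⟨U, hUS, hUc, ?_, fun v hv => ?_⟩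
  · by_contra! hempty
    obtain ⟨⟨u, hu⟩⟩ := hUc.nonempty
    rw [contractDartCount, hempty, card_empty, mul_zero, zero_add] at hUd
    have hR : (S \ U).Nonempty := by
      by_contra! hR
      simp only [hR, SimpleGraph.interedges_empty_left, card_empty] at hUd
      omega
    have := hmin _ (sdiff_ssubset hUS ⟨u, hu⟩) hR
    rw [mul_add_one] at hUd
    omega
  · obtain ⟨⟨hvS, hvU⟩, u, hu, huv⟩ := mem_outerBoundary.1 hv
    have hlt : contractDartCount G S (insert v U) < 2 * c * (#(S \ insert v U) + 1) := by
      by_contra! hle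
      refine hvU (hmax ⟨insert_subset hvS hUS, ?_, hle⟩ (subset_insert v U) (mem_insert_self v U))
      rw [coe_insert]
      exact connected_induce_insert hUc hu huv
    have hstep := contractDartCount_le_insert hv
    rw [sdiff_insert] at hlt
    rw [← card_erase_add_one (mem_sdiff.2 ⟨hvS, hvU⟩), mul_add_one] at hUd
    omega

end Density

/-- **Mader's theorem**, by contracting a set `U` to a vertex that is joined to the whole of its
dense boundary, where a model with one branch set fewer exists by induction. -/
lemma exists_isMinorModel_top_of_le_card_interedges {V : Type*} {G : SimpleGraph V}
    [DecidableRel G.Adj] (t : ℕ) {S : Finset V} (hS : S.Nonempty)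
    (hdense : 2 ^ (t + 1) * #S ≤ #(G.interedges S S)) :
    ∃ f, IsMinorModel (⊤ : SimpleGraph (Fin t)) G f ∧ ∀ a, f a ⊆ S := by
  classical
  induction t generalizing S with
  | zero => exact ⟨fun a => a.elim0, ⟨fun a => a.elim0, fun a => a.elim0, fun a => a.elim0⟩,
      fun a => a.elim0⟩
  | succ t ih =>
    obtain ⟨R, hRS, ⟨hR, hRdense⟩, hmin⟩ := exists_minimal_le_of_wellFoundedLT
      (fun R : Finset V => R.Nonempty ∧ 2 ^ (t + 1 + 1) * #R ≤ #(G.interedges R R)) S ⟨hS, hdense⟩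
    rw [pow_succ' 2 (t + 1)] at hRdense
    obtain ⟨U, hUR, hUc, hN, hdeg⟩ := exists_connected_forall_le_card_outerBoundary
      (by positivity) hR hRdense fun R' hR' hne => by
        by_contra! hle
        rw [← pow_succ'] at hle
        exact hR'.2 (hmin ⟨hne, hle⟩ hR'.1)
    set N := outerBoundary G R U
    obtain ⟨f, hf, hfN⟩ := ih hN <| by
      rw [card_interedges_eq_sum, mul_comm, ← smul_eq_mul]
      exact card_nsmul_le_sum _ _ _ hdeg
    have hNR : ∀ v ∈ N, (v ∈ R ∧ v ∉ U) ∧ ∃ u ∈ U, G.Adj u v := fun v => mem_outerBoundary.1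
    refine ⟨_, hf.cons hUc (fun a => ?_) (fun a => ?_), Fin.cases ?_ fun a => ?_⟩
    · exact Set.disjoint_left.2 fun v hvU hva => (hNR v (hfN a hva)).1.2 hvU
    · obtain ⟨⟨v, hv⟩⟩ := (hf.connected a).nonempty
      obtain ⟨u, hu, huv⟩ := (hNR v (hfN a hv)).2
      exact ⟨u, hu, v, hv, huv⟩
    · exact coe_subset.2 (hUR.trans hRS)
    · exact fun v hv => hRS (hNR v (hfN a hv)).1.1

lemma card_edgeSet_le_of_not_graphMinor {W : Type*} [Finite W] {H : SimpleGraph W} {t : ℕ}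
    (hH : ¬ GraphMinor (⊤ : SimpleGraph (Fin t)) H) :
    Nat.card H.edgeSet ≤ 2 ^ t * Nat.card W := by
  classical
  have := Fintype.ofFinite W
  by_contra! hlt
  have hne : (univ : Finset W).Nonempty := by
    rw [univ_nonempty_iff]
    by_contra! hW
    simp at hlt
  have hdarts : #(H.interedges univ univ) = 2 * Nat.card H.edgeSet := by
    rw [card_interedges_eq_sum, Nat.card_eq_fintype_card, ← SimpleGraph.edgeFinset_card,
      ← H.sum_degrees_eq_twice_card_edges]
    simp only [← SimpleGraph.card_neighborFinset_eq_degree, SimpleGraph.neighborFinset_eq_filter]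
  obtain ⟨f, hf, -⟩ := exists_isMinorModel_top_of_le_card_interedges t hne <| by
    rw [hdarts, pow_succ', mul_assoc, card_univ, ← Nat.card_eq_fintype_card]
    exact Nat.mul_le_mul_left 2 hlt.le
  exact hH (graphMinor_iff_exists_isMinorModel.2 ⟨f, hf⟩)

/-! ### Weighted Voronoi cells -/

section Voronoi

variable {V I : Type*} {G : SimpleGraph V} {c : I → V} {s : I → ℕ} {x y z : V} {i j : I}

lemma dist_le_dist_add_one_of_adj (h : G.Adj x y) : G.dist x z ≤ G.dist y z + 1 := by
  have := h.reachable.dist_triangle_left z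
  rw [SimpleGraph.dist_eq_one_iff_adj.2 h] at this
  omega

lemma exists_adj_dist_eq_add_one (h : G.Reachable x z) (hne : x ≠ z) :
    ∃ y, G.Adj x y ∧ G.dist x z = G.dist y z + 1 := by
  obtain ⟨p, hp⟩ := h.exists_walk_length_eq_dist
  cases p with
  | nil => exact absurd rfl hne
  | @cons _ y _ hxy q =>
    refine ⟨y, hxy, le_antisymm (dist_le_dist_add_one_of_adj hxy) ?_⟩
    rw [← hp, SimpleGraph.Walk.length_cons]
    exact Nat.succ_le_succ (SimpleGraph.dist_le q)

/-- The weighted distance from `y` to the site `c i`, with the index `i` attached so that the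
lexicographic order breaks ties. -/
noncomputable def siteKey (G : SimpleGraph V) (c : I → V) (s : I → ℕ) (y : V) (i : I) : ℕ ×ₗ I :=
  toLex (G.dist y (c i) + s i, i)

lemma siteKey_injective : Function.Injective (siteKey G c s y) :=
  fun _ _ h => congrArg (fun k => (ofLex k).2) h

variable [LinearOrder I]

lemma siteKey_le_siteKey_of_add_le (h : siteKey G c s x i ≤ siteKey G c s x j)
    (hd : G.dist y (c i) + G.dist x (c j) ≤ G.dist x (c i) + G.dist y (c j)) :
    siteKey G c s y i ≤ siteKey G c s y j := by
  simp only [siteKey, Prod.Lex.toLex_le_toLex] at h ⊢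
  grind

lemma siteKey_lt_siteKey_of_add_le (h : siteKey G c s x i < siteKey G c s x j)
    (hd : G.dist y (c i) + G.dist x (c j) ≤ G.dist x (c i) + G.dist y (c j)) :
    siteKey G c s y i < siteKey G c s y j := by
  refine (siteKey_le_siteKey_of_add_le h.le hd).lt_of_ne fun he => h.ne ?_
  rw [siteKey_injective he]

/-- The cell of `i` in the additively weighted Voronoi diagram of `G` with sites `c i` and weights
`s i`, ties being broken by the order on `I`. -/
def voronoiCell (G : SimpleGraph V) (c : I → V) (s : I → ℕ) (i : I) : Set V :=
  {y | G.Reachable y (c i) ∧ ∀ k, G.Reachable y (c k) → siteKey G c s y i ≤ siteKey G c s y k}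

lemma disjoint_voronoiCell :
    Pairwise fun i j => Disjoint (voronoiCell G c s i) (voronoiCell G c s j) := by
  refine fun i j hij => Set.disjoint_left.2 fun y hi hj => hij ?_
  exact siteKey_injective ((hi.2 j hj.1).antisymm (hj.2 i hi.1))

lemma mem_voronoiCell_of_adj (hx : x ∈ voronoiCell G c s i) (hxy : G.Adj x y)
    (hd : G.dist x (c i) = G.dist y (c i) + 1) : y ∈ voronoiCell G c s i := by
  refine ⟨hxy.symm.reachable.trans hx.1, fun k hk => ?_⟩
  have := dist_le_dist_add_one_of_adj hxy (z := c k)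
  exact siteKey_le_siteKey_of_add_le (hx.2 k (hxy.reachable.trans hk)) (by omega)

lemma connected_induce_voronoiCell (hi : c i ∈ voronoiCell G c s i) :
    (G.induce (voronoiCell G c s i)).Connected := by
  refine connected_of_exists_adj_lt (fun y => G.dist y (c i)) ⟨c i, hi⟩ fun y hy => ?_
  obtain ⟨z, hyz, hd⟩ := exists_adj_dist_eq_add_one y.2.1 fun h => hy (Subtype.ext h)
  exact ⟨⟨z, mem_voronoiCell_of_adj y.2 hyz hd⟩, hyz, hd ▸ Nat.lt_succ_self _⟩

lemma exists_mem_voronoiCell [WellFoundedLT I] (hx : G.Reachable x (c j)) :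
    ∃ i, x ∈ voronoiCell G c s i := by
  obtain ⟨i, hi, hmin⟩ := exists_minimalFor_of_wellFoundedLT
    (fun i => G.Reachable x (c i)) (siteKey G c s x) ⟨j, hx⟩
  exact ⟨i, hi, fun k hk => (le_total _ _).elim id fun h => hmin hk h⟩

lemma mem_voronoiCell_self
    (hnd : ∀ k, i ≠ k → G.Reachable (c i) (c k) → s i < G.dist (c i) (c k) + s k) :
    c i ∈ voronoiCell G c s i := by
  refine ⟨.rfl, fun k hk => ?_⟩
  rcases eq_or_ne i k with rfl | hik
  · exact le_rfl
  · have := hnd k hik hk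
    simp only [siteKey, Prod.Lex.toLex_le_toLex, SimpleGraph.dist_self]
    omega

/-- A geodesic from `x` to `c j` enters the cell of `j` from the cell of some `k`; both weighted
distances shrink along the geodesic, so `k` was already preferred to `j` at `x`. -/
lemma exists_touchingGraph_adj_siteKey_lt [WellFoundedLT I] (hj : c j ∈ voronoiCell G c s j)
    (hx : G.Reachable x (c j)) (hxj : x ∉ voronoiCell G c s j) :
    ∃ k, (touchingGraph G (voronoiCell G c s)).Adj j k ∧ G.Reachable x (c k) ∧
      siteKey G c s x k < siteKey G c s x j := by
  obtain ⟨n, hn⟩ : ∃ n, G.dist x (c j) = n := ⟨_, rfl⟩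
  induction n generalizing x with
  | zero => exact absurd (hx.dist_eq_zero_iff.1 hn ▸ hj) hxj
  | succ n ih =>
    obtain ⟨y, hxy, hd⟩ := exists_adj_dist_eq_add_one hx fun h => hxj (h ▸ hj)
    by_cases hy : y ∈ voronoiCell G c s j
    · obtain ⟨k, hk⟩ := exists_mem_voronoiCell (s := s) hx
      have hjk : j ≠ k := by rintro rfl; exact hxj hk
      exact ⟨k, ⟨hjk, y, hy, x, hk, hxy.symm⟩, hk.1,
        (hk.2 j hx).lt_of_ne (siteKey_injective.ne hjk.symm)⟩
    · obtain ⟨k, hjk, hk, hlt⟩ := ih (hxy.symm.reachable.trans hx) hy (by omega)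
      have := dist_le_dist_add_one_of_adj hxy (z := c k)
      exact ⟨k, hjk, hxy.reachable.trans hk, siteKey_lt_siteKey_of_add_le hlt (by omega)⟩

lemma preconnected_induce_touchingGraph_voronoiCell [WellFoundedLT I]
    (hc : ∀ i, c i ∈ voronoiCell G c s i) (x : V) (ρ : ℕ) :
    ((touchingGraph G (voronoiCell G c s)).induce
      {i | G.Reachable x (c i) ∧ G.dist x (c i) + s i ≤ ρ}).Preconnected := by
  set P := {i | G.Reachable x (c i) ∧ G.dist x (c i) + s i ≤ ρ}
  have hlower : ∀ i ∈ P, ∀ k, G.Reachable x (c k) → siteKey G c s x k ≤ siteKey G c s x i →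
      k ∈ P := by
    refine fun i hi k hk hle => ⟨hk, ?_⟩
    simp only [siteKey, Prod.Lex.toLex_le_toLex] at hle
    have := hi.2
    omega
  rcases P.eq_empty_or_nonempty with hP | ⟨j, hj⟩
  · rw [hP]; exact .of_subsingleton
  obtain ⟨i₀, hi₀⟩ := exists_mem_voronoiCell (s := s) hj.1
  refine (connected_of_exists_adj_lt (fun i : P => siteKey G c s x i)
    ⟨i₀, hlower j hj i₀ hi₀.1 (hi₀.2 j hj.1)⟩ fun i hi => ?_).preconnected
  obtain ⟨k, hik, hk, hlt⟩ := exists_touchingGraph_adj_siteKey_lt (hc i) i.2.1 fun h =>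
    hi (Subtype.ext (by_contra fun hne => Set.disjoint_left.1 (disjoint_voronoiCell hne) h hi₀))
  exact ⟨⟨k, hlower i i.2 k hk hlt.le⟩, hik, hlt⟩

end Voronoi

lemma exists_sparse_support_of_not_graphMinor {V I : Type*} [Finite I] {G : SimpleGraph V} {t : ℕ}
    (hG : ¬ GraphMinor (⊤ : SimpleGraph (Fin t)) G) {c : I → V} {s : I → ℕ}
    (hnd : ∀ i k, i ≠ k → G.Reachable (c i) (c k) → s i < G.dist (c i) (c k) + s k) :
    ∃ H : SimpleGraph I, Nat.card H.edgeSet ≤ 2 ^ t * Nat.card I ∧ ∀ x ρ,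
      (H.induce {i | G.Reachable x (c i) ∧ G.dist x (c i) + s i ≤ ρ}).Preconnected := by
  obtain ⟨_, _⟩ := exists_wellFoundedLT I
  have hc : ∀ i, c i ∈ voronoiCell G c s i := fun i => mem_voronoiCell_self (hnd i)
  have hminor : GraphMinor (touchingGraph G (voronoiCell G c s)) G :=
    graphMinor_touchingGraph (fun i => connected_induce_voronoiCell (hc i)) disjoint_voronoiCell
  exact ⟨_, card_edgeSet_le_of_not_graphMinor fun h => hG (h.trans hminor),
    preconnected_induce_touchingGraph_voronoiCell hc⟩

/-! ### Sparse supports and random sampling -/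

section PairTraces

variable {I : Type*}

/-- The set system `𝒜` has sparse supports: every finite `S` carries a graph with at most `K * #S`
edges in which the trace on `S` of each member of `𝒜` is connected (or empty). -/
def HasSparseSupports (K : ℕ) (𝒜 : Set (Set I)) : Prop :=
  ∀ S : Finset I, ∃ H : SimpleGraph S, Nat.card H.edgeSet ≤ K * #S ∧
    ∀ P ∈ 𝒜, (H.induce {i | ↑i ∈ P}).Preconnected

/-- The pair `{i, j}` is the trace on `S` of a member of `𝒜`. -/
def IsPairTrace (𝒜 : Set (Set I)) (S : Finset I) (i j : I) : Prop :=
  i ≠ j ∧ ∃ P ∈ 𝒜, ∀ k ∈ S, k ∈ P ↔ k = i ∨ k = j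

open Classical in
/-- The ordered pairs of elements of `S` that form a trace on `S` of a member of `𝒜`. -/
noncomputable def pairTraces (𝒜 : Set (Set I)) (S : Finset I) : Finset (I × I) :=
  {q ∈ S ×ˢ S | IsPairTrace 𝒜 S q.1 q.2}

lemma mem_pairTraces {𝒜 : Set (Set I)} {S : Finset I} {q : I × I} :
    q ∈ pairTraces 𝒜 S ↔ (q.1 ∈ S ∧ q.2 ∈ S) ∧ IsPairTrace 𝒜 S q.1 q.2 := by
  classical
  rw [pairTraces, mem_filter, mem_product]

lemma adj_of_isPairTrace {𝒜 : Set (Set I)} {S : Finset I} {H : SimpleGraph S}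
    (hH : ∀ P ∈ 𝒜, (H.induce {i | ↑i ∈ P}).Preconnected) {i j : S}
    (hij : IsPairTrace 𝒜 S i j) : H.Adj i j := by
  obtain ⟨hne, P, hP, htrace⟩ := hij
  have hi : (i : I) ∈ P := (htrace i i.2).2 (.inl rfl)
  have hj : (j : I) ∈ P := (htrace j j.2).2 (.inr rfl)
  have : Nontrivial {i : S | ↑i ∈ P} :=
    ⟨⟨i, hi⟩, ⟨j, hj⟩, fun h => hne (congrArg (fun k => (k.1 : I)) h)⟩
  obtain ⟨⟨k, hk⟩, hik⟩ := (hH P hP).exists_adj_of_nontrivial ⟨i, hi⟩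
  rcases (htrace k k.2).1 hk with h | h
  · exact absurd (Subtype.ext h) (H.ne_of_adj hik).symm
  · rwa [← Subtype.ext h]

lemma HasSparseSupports.card_pairTraces_le {K : ℕ} {𝒜 : Set (Set I)}
    (h : HasSparseSupports K 𝒜) (S : Finset I) : #(pairTraces 𝒜 S) ≤ 2 * K * #S := by
  classical
  obtain ⟨H, hK, hH⟩ := h S
  have hsub : pairTraces 𝒜 S ⊆ (univ : Finset H.Dart).image fun d => (↑d.fst, ↑d.snd) := by
    rintro ⟨i, j⟩ hq
    obtain ⟨⟨hi, hj⟩, hij⟩ := mem_pairTraces.1 hq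
    exact mem_image.2 ⟨⟨(⟨i, hi⟩, ⟨j, hj⟩), adj_of_isPairTrace hH hij⟩, mem_univ _, rfl⟩
  calc #(pairTraces 𝒜 S) ≤ Fintype.card H.Dart := (card_le_card hsub).trans card_image_le
    _ = 2 * Nat.card H.edgeSet := by
      rw [H.dart_card_eq_twice_card_edges, SimpleGraph.edgeFinset_card, Nat.card_eq_fintype_card]
    _ ≤ 2 * K * #S := by rw [mul_assoc]; exact Nat.mul_le_mul_left 2 hK

end PairTraces

section Sampling

variable {I : Type*} [Fintype I] [DecidableEq I] {p : I → ℝ}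

/-- The expectation of a function of the random subset of `I` that contains each `i` independently
with probability `p i`. -/
noncomputable def bernoulliExp (p : I → ℝ) : (Finset I → ℝ) →ₗ[ℝ] ℝ :=
  ∑ S, ((∏ i ∈ S, p i) * ∏ i ∈ Sᶜ, (1 - p i)) • LinearMap.proj S

lemma bernoulliExp_apply (p : I → ℝ) (f : Finset I → ℝ) :
    bernoulliExp p f = ∑ S, ((∏ i ∈ S, p i) * ∏ i ∈ Sᶜ, (1 - p i)) * f S := by
  simp only [bernoulliExp, LinearMap.sum_apply, LinearMap.smul_apply, LinearMap.proj_apply,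
    smul_eq_mul]

lemma bernoulliExp_const (p : I → ℝ) (a : ℝ) : bernoulliExp p (fun _ => a) = a := by
  rw [bernoulliExp_apply, ← sum_mul, ← Fintype.prod_add]
  simp only [add_sub_cancel, prod_const_one, one_mul]

lemma bernoulliExp_mono (h0 : ∀ i, 0 ≤ p i) (h1 : ∀ i, p i ≤ 1) : Monotone (bernoulliExp p) := by
  intro f g hfg
  rw [bernoulliExp_apply, bernoulliExp_apply]
  refine sum_le_sum fun S _ => mul_le_mul_of_nonneg_left (hfg S) (mul_nonneg ?_ ?_)
  · exact prod_nonneg fun i _ => h0 i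
  · exact prod_nonneg fun i _ => sub_nonneg.2 (h1 i)

lemma exists_lt_of_bernoulliExp_lt (h0 : ∀ i, 0 ≤ p i) (h1 : ∀ i, p i ≤ 1) {f : Finset I → ℝ}
    {a : ℝ} (h : bernoulliExp p f < a) : ∃ S, f S < a := by
  by_contra! hle
  have := bernoulliExp_mono h0 h1 (show (fun _ => a) ≤ f from hle)
  rw [bernoulliExp_const] at this
  linarith

lemma bernoulliExp_ite_mem (p : I → ℝ) (i : I) (f : Finset I → ℝ) :
    bernoulliExp p (fun S => if i ∈ S then f S else 0) =
      p i * bernoulliExp p (fun S => f (insert i S)) := by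
  have hi : i ∉ (univ : Finset I).erase i := notMem_erase i univ
  have hsplit (g : Finset I → ℝ) :
      ∑ S, g S = ∑ S ∈ ((univ : Finset I).erase i).powerset, (g S + g (insert i S)) := by
    rw [sum_add_distrib, ← sum_powerset_insert hi, insert_erase (mem_univ i), powerset_univ]
  rw [bernoulliExp_apply, bernoulliExp_apply, hsplit, hsplit, mul_sum]
  refine sum_congr rfl fun S hS => ?_
  have hiS : i ∉ S := fun h => hi (mem_powerset.1 hS h)
  rw [← mul_prod_erase Sᶜ _ (mem_compl.2 hiS), ← compl_insert, prod_insert hiS, insert_idem,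
    if_neg hiS, if_pos (mem_insert_self i S)]
  ring

lemma bernoulliExp_ite_mem_one (p : I → ℝ) (i : I) :
    bernoulliExp p (fun S => if i ∈ S then 1 else 0) = p i := by
  rw [bernoulliExp_ite_mem p i fun _ => 1, bernoulliExp_const, mul_one]

lemma bernoulliExp_sum {ι : Type*} (p : I → ℝ) (s : Finset ι) (f : ι → Finset I → ℝ) :
    bernoulliExp p (fun S => ∑ k ∈ s, f k S) = ∑ k ∈ s, bernoulliExp p (f k) := by
  rw [← map_sum]
  congr 1
  ext S
  rw [Finset.sum_apply]

lemma bernoulliExp_card (p : I → ℝ) : bernoulliExp p (fun S => (#S : ℝ)) = ∑ i, p i := by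
  have hcard (S : Finset I) : (#S : ℝ) = ∑ i, if i ∈ S then 1 else 0 := by
    rw [sum_boole, filter_univ_mem]
  simp only [hcard, bernoulliExp_sum, bernoulliExp_ite_mem_one]

open Classical in
/-- The `p ⊗ p`-weight of the pairs that become pair traces once they are added to `S`. -/
noncomputable def pairTraceWeight (𝒜 : Set (Set I)) (p : I → ℝ) (S : Finset I) : ℝ :=
  ∑ i, ∑ j, p i * p j * if IsPairTrace 𝒜 (insert i (insert j S)) i j then 1 else 0

lemma bernoulliExp_card_pairTraces (𝒜 : Set (Set I)) (p : I → ℝ) :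
    bernoulliExp p (fun S => (#(pairTraces 𝒜 S) : ℝ)) =
      bernoulliExp p (pairTraceWeight 𝒜 p) := by
  classical
  have hcard (S : Finset I) : (#(pairTraces 𝒜 S) : ℝ) = ∑ i, ∑ j,
      if i ∈ S then if j ∈ S then if IsPairTrace 𝒜 S i j then 1 else 0 else 0 else 0 := by
    rw [← sum_product', univ_product_univ]
    simp only [← ite_and]
    rw [sum_boole]
    congr 2
    ext q
    simp [mem_pairTraces, and_assoc]
  unfold pairTraceWeight
  simp only [hcard, bernoulliExp_sum]
  refine sum_congr rfl fun i _ => sum_congr rfl fun j _ => ?_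
  rw [bernoulliExp_ite_mem]
  rcases eq_or_ne i j with rfl | hij
  · simp [IsPairTrace, bernoulliExp_const]
  simp only [mem_insert, hij.symm, false_or]
  rw [bernoulliExp_ite_mem p j fun S => if IsPairTrace 𝒜 (insert i S) i j then 1 else 0,
    ← mul_assoc, ← smul_eq_mul, ← map_smul]
  rfl

/-- The Clarkson–Shor bound. -/
lemma HasSparseSupports.bernoulliExp_pairTraceWeight_le {K : ℕ} {𝒜 : Set (Set I)}
    (h : HasSparseSupports K 𝒜) (h0 : ∀ i, 0 ≤ p i) (h1 : ∀ i, p i ≤ 1) :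
    bernoulliExp p (pairTraceWeight 𝒜 p) ≤ 2 * K * ∑ i, p i := by
  calc bernoulliExp p (pairTraceWeight 𝒜 p)
      = bernoulliExp p (fun S => (#(pairTraces 𝒜 S) : ℝ)) :=
        (bernoulliExp_card_pairTraces 𝒜 p).symm
    _ ≤ bernoulliExp p ((2 * K : ℝ) • fun S => (#S : ℝ)) := by
      refine bernoulliExp_mono h0 h1 fun S => ?_
      simp only [Pi.smul_apply, smul_eq_mul]
      exact_mod_cast h.card_pairTraces_le S
    _ = 2 * K * ∑ i, p i := by rw [map_smul, bernoulliExp_card, smul_eq_mul]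

end Sampling

/-! ### From fractional to integral matchings -/

section SetWeight

variable {I : Type*} [Fintype I] {p q : I → ℝ} {P : Set I}

/-- The total weight `p(P)` of a set `P` under a weight function `p`. -/
noncomputable def setWeight (p : I → ℝ) (P : Set I) : ℝ :=
  ∑ i, P.indicator p i

lemma setWeight_nonneg (h0 : ∀ i, 0 ≤ p i) : 0 ≤ setWeight p P :=
  sum_nonneg fun i _ => Set.indicator_nonneg (fun i _ => h0 i) i

lemma le_setWeight (h0 : ∀ i, 0 ≤ p i) {i : I} (hi : i ∈ P) : p i ≤ setWeight p P := by
  rw [← Set.indicator_of_mem hi p]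
  exact single_le_sum (fun i _ => Set.indicator_nonneg (fun i _ => h0 i) i) (mem_univ i)

lemma setWeight_mono (hpq : ∀ i ∈ P, p i ≤ q i) : setWeight p P ≤ setWeight q P :=
  sum_le_sum fun i _ => Set.indicator_le_indicator' (hpq i)

lemma setWeight_const_mul (a : ℝ) : setWeight (fun i => a * p i) P = a * setWeight p P := by
  simp only [setWeight, Set.indicator_const_mul, mul_sum]

lemma setWeight_eq_sum [DecidablePred (· ∈ P)] (p : I → ℝ) :
    setWeight p P = ∑ i with i ∈ P, p i := by
  rw [setWeight, sum_indicator_eq_sum_filter]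

end SetWeight

section IndependentSets

variable {I : Type*}

open Classical in
/-- Greedily pick an `i` whose neighbours in the rest of `A` have total weight at most `D`. -/
lemma exists_isIndepSet_of_forall_sum_le {C : SimpleGraph I} {p : I → ℝ} {D : ℝ}
    (h1 : ∀ i, p i ≤ 1)
    (hC : ∀ A : Finset I, ∑ i ∈ A, p i * ∑ j ∈ A with C.Adj i j, p j ≤ D * ∑ i ∈ A, p i)
    (A : Finset I) (hA : ∀ i ∈ A, 0 < p i) :
    ∃ M ⊆ A, C.IsIndepSet M ∧ ∑ i ∈ A, p i ≤ (D + 1) * #M := by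
  induction A using Finset.strongInduction with
  | _ A ih =>
  obtain rfl | hne := A.eq_empty_or_nonempty
  · exact ⟨∅, Subset.rfl, by simp, by simp⟩
  obtain ⟨i, hiA, hi⟩ : ∃ i ∈ A, ∑ j ∈ A with C.Adj i j, p j ≤ D := by
    obtain ⟨i, hiA, hi⟩ := exists_le_of_sum_le hne ((hC A).trans_eq (mul_sum ..))
    exact ⟨i, hiA, le_of_mul_le_mul_left (hi.trans_eq (mul_comm ..)) (hA i hiA)⟩
  have hsub : {j ∈ A | j ≠ i ∧ ¬ C.Adj i j} ⊂ A :=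
    filter_ssubset.2 ⟨i, hiA, fun h => h.1 rfl⟩
  obtain ⟨M, hMA, hM, hle⟩ := ih _ hsub fun j hj => hA j (hsub.1 hj)
  have hmem (j) (hj : j ∈ M) : j ≠ i ∧ ¬ C.Adj i j := (mem_filter.1 (hMA hj)).2
  refine ⟨insert i M, insert_subset hiA (hMA.trans hsub.1), ?_, ?_⟩
  · rw [coe_insert]
    exact hM.insert fun j hj _ => ⟨(hmem j hj).2, fun h => (hmem j hj).2 h.symm⟩
  have hsplit : ∑ j ∈ A, p j = p i + ∑ j ∈ A with C.Adj i j, p j +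
      ∑ j ∈ A with j ≠ i ∧ ¬ C.Adj i j, p j := by
    rw [← add_sum_erase A p hiA, ← sum_filter_add_sum_filter_not (A.erase i) (C.Adj i), add_assoc]
    congr 3 <;> ext j <;> simp only [mem_filter, mem_erase]
    · exact ⟨fun h => ⟨h.1.2, h.2⟩, fun h => ⟨⟨h.2.ne', h.1⟩, h.2⟩⟩
    · tauto
  rw [card_insert_of_notMem fun h => (hmem i h).1 rfl]
  push_cast
  linarith [h1 i]

end IndependentSets

section Matching

variable {I : Type*} {𝒜 : Set (Set I)}

/-- The graph joining two elements that lie in a common member of `𝒜`. -/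
def primalGraph (𝒜 : Set (Set I)) : SimpleGraph I where
  Adj i j := i ≠ j ∧ ∃ P ∈ 𝒜, i ∈ P ∧ j ∈ P
  symm := ⟨fun _ _ ⟨hne, P, hP, hi, hj⟩ => ⟨hne.symm, P, hP, hj, hi⟩⟩
  loopless := ⟨fun _ h => h.1 rfl⟩

lemma isPairTrace_insert_insert [DecidableEq I] {P : Set I} (hP : P ∈ 𝒜) {S : Finset I} {i j : I}
    (hij : i ≠ j) (hi : i ∈ P) (hj : j ∈ P) (hS : ∀ k ∈ S, k ∉ P) :
    IsPairTrace 𝒜 (insert i (insert j S)) i j := by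
  refine ⟨hij, P, hP, fun k hk => ⟨fun hkP => ?_, ?_⟩⟩
  · simp only [mem_insert] at hk
    exact hk.imp_right (Or.resolve_right · fun hkS => hS k hkS hkP)
  · rintro (rfl | rfl) <;> assumption

variable [Fintype I] {p : I → ℝ}

open Classical in
/-- A union bound over the event that the random set misses `P`. -/
lemma one_sub_setWeight_le_bernoulliExp [DecidableEq I] (h0 : ∀ i, 0 ≤ p i)
    (h1 : ∀ i, p i ≤ 1) {P : Set I} (hP : P ∈ 𝒜) {i j : I} (hij : i ≠ j) (hi : i ∈ P) (hj : j ∈ P) :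
    1 - setWeight p P ≤ bernoulliExp p fun S =>
      if IsPairTrace 𝒜 (insert i (insert j S)) i j then 1 else 0 := by
  have hexp : bernoulliExp p (fun S => 1 - setWeight (fun k => if k ∈ S then 1 else 0) P) =
      1 - setWeight p P := by
    change bernoulliExp p ((fun _ => 1) - fun S => setWeight _ P) = _
    simp only [map_sub, bernoulliExp_const, setWeight_eq_sum, bernoulliExp_sum,
      bernoulliExp_ite_mem_one]
  rw [← hexp]
  refine bernoulliExp_mono h0 h1 fun S => ?_
  have hind (k : I) : (0 : ℝ) ≤ if k ∈ S then 1 else 0 := by split_ifs <;> norm_num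
  by_cases hS : ∀ k ∈ S, k ∉ P
  · dsimp only
    rw [if_pos (isPairTrace_insert_insert hP hij hi hj hS)]
    exact sub_le_self _ (setWeight_nonneg hind)
  · push Not at hS
    obtain ⟨k, hkS, hkP⟩ := hS
    have hk := le_setWeight hind hkP
    rw [if_pos hkS] at hk
    exact (sub_nonpos.2 hk).trans (by split_ifs <;> norm_num)

lemma HasSparseSupports.sum_mul_setWeight_neighborSet_le {K : ℕ} (h : HasSparseSupports K 𝒜)
    (h0 : ∀ i, 0 ≤ p i) (h1 : ∀ i, p i ≤ 1) (hp : ∀ P ∈ 𝒜, setWeight p P ≤ 1 / 2) :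
    ∑ i, p i * setWeight p ((primalGraph 𝒜).neighborSet i) ≤ 4 * K * ∑ i, p i := by
  classical
  have hpair (i j : I) :
      p i * ((primalGraph 𝒜).neighborSet i).indicator p j ≤ 2 * (p i * p j * bernoulliExp p
        fun S => if IsPairTrace 𝒜 (insert i (insert j S)) i j then 1 else 0) := by
    have hpp := mul_nonneg (h0 i) (h0 j)
    by_cases hadj : j ∈ (primalGraph 𝒜).neighborSet i
    · obtain ⟨hij, P, hP, hi, hj⟩ := id hadj
      rw [Set.indicator_of_mem hadj]
      have := one_sub_setWeight_le_bernoulliExp h0 h1 hP hij hi hj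
      nlinarith [hp P hP]
    · rw [Set.indicator_of_notMem hadj, mul_zero]
      refine mul_nonneg zero_le_two (mul_nonneg hpp ?_)
      refine (bernoulliExp_const p 0).symm.trans_le (bernoulliExp_mono h0 h1 fun S => ?_)
      dsimp only
      split_ifs <;> norm_num
  calc ∑ i, p i * setWeight p ((primalGraph 𝒜).neighborSet i)
      ≤ ∑ i, ∑ j, 2 * (p i * p j * bernoulliExp p
        fun S => if IsPairTrace 𝒜 (insert i (insert j S)) i j then 1 else 0) := by
        refine sum_le_sum fun i _ => ?_
        rw [setWeight, mul_sum]
        exact sum_le_sum fun j _ => hpair i j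
    _ = 2 * bernoulliExp p (pairTraceWeight 𝒜 p) := by
        simp only [← mul_sum, ← smul_eq_mul (p _ * p _), ← map_smul, ← bernoulliExp_sum]
        rfl
    _ ≤ 4 * K * ∑ i, p i := by linarith [h.bernoulliExp_pairTraceWeight_le h0 h1]

/-- Independent sets in the primal graph of a dual system are matchings, so for dual systems this
rounds a fractional matching. -/
lemma HasSparseSupports.exists_isIndepSet_primalGraph {K : ℕ} (h : HasSparseSupports K 𝒜)
    (h0 : ∀ i, 0 ≤ p i) (h1 : ∀ i, p i ≤ 1) (hp : ∀ P ∈ 𝒜, setWeight p P ≤ 1 / 2) :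
    ∃ M : Finset I, (primalGraph 𝒜).IsIndepSet M ∧ ∑ i, p i ≤ (4 * K + 1) * #M := by
  classical
  have hC (A : Finset I) :
      ∑ i ∈ A, p i * ∑ j ∈ A with (primalGraph 𝒜).Adj i j, p j ≤ 4 * K * ∑ i ∈ A, p i := by
    let q : I → ℝ := fun i => if i ∈ A then p i else 0
    have hq0 (i : I) : 0 ≤ q i := by dsimp only [q]; split_ifs <;> [exact h0 i; exact le_rfl]
    have hqp (i : I) : q i ≤ p i := by dsimp only [q]; split_ifs <;> [exact le_rfl; exact h0 i]
    have hq := h.sum_mul_setWeight_neighborSet_le hq0 (fun i => (hqp i).trans (h1 i))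
      fun P hP => (setWeight_mono fun i _ => hqp i).trans (hp P hP)
    simpa only [q, setWeight_eq_sum, ite_mul, zero_mul, sum_ite_mem, univ_inter, inter_comm _ A,
      inter_filter, inter_univ, SimpleGraph.mem_neighborSet] using hq
  obtain ⟨M, -, hM, hle⟩ := exists_isIndepSet_of_forall_sum_le h1 hC
    {i | 0 < p i} fun i hi => (mem_filter.1 hi).2
  refine ⟨M, hM, le_of_eq_of_le (sum_filter_of_ne fun i _ hi => ?_).symm hle⟩
  exact (h0 i).lt_of_ne' hi

end Matching

/-! ### Nets -/

section Nets

variable {I : Type*} [Fintype I] {𝒜 : Set (Set I)} {K : ℕ}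

lemma pairTraceWeight_nonneg [DecidableEq I] {q : I → ℝ} (h0 : ∀ i, 0 ≤ q i) (S : Finset I) :
    0 ≤ pairTraceWeight 𝒜 q S :=
  sum_nonneg fun i _ => sum_nonneg fun j _ =>
    mul_nonneg (mul_nonneg (h0 i) (h0 j)) (by split_ifs <;> norm_num)

/-- All pairs inside `P` are traces on `S` once added to it, and the diagonal has weight at most
`q(P) / 2`. -/
lemma setWeight_mul_sub_le_pairTraceWeight [DecidableEq I] {q : I → ℝ} (h0 : ∀ i, 0 ≤ q i)
    (hq : ∀ i, q i ≤ 1 / 2) {P : Set I} (hP : P ∈ 𝒜) {S : Finset I} (hS : ∀ k ∈ S, k ∉ P) :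
    setWeight q P * (setWeight q P - 1 / 2) ≤ pairTraceWeight 𝒜 q S := by
  classical
  have hterm (i j : I) : 0 ≤ q i * q j *
      if IsPairTrace 𝒜 (insert i (insert j S)) i j then 1 else 0 :=
    mul_nonneg (mul_nonneg (h0 i) (h0 j)) (by split_ifs <;> norm_num)
  have hrow (i : I) (hi : i ∈ P) : q i * (setWeight q P - 1 / 2) ≤
      ∑ j, q i * q j * if IsPairTrace 𝒜 (insert i (insert j S)) i j then 1 else 0 := by
    calc q i * (setWeight q P - 1 / 2)
        ≤ q i * (setWeight q P - q i) :=
          mul_le_mul_of_nonneg_left (sub_le_sub_left (hq i) _) (h0 i)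
      _ = ∑ j ∈ ({j | j ∈ P} : Finset I).erase i, q i * q j := by
          rw [← mul_sum, setWeight_eq_sum, ← sum_erase_eq_sub (mem_filter.2 ⟨mem_univ i, hi⟩)]
      _ = ∑ j ∈ ({j | j ∈ P} : Finset I).erase i,
            q i * q j * if IsPairTrace 𝒜 (insert i (insert j S)) i j then 1 else 0 := by
          refine sum_congr rfl fun j hj => ?_
          obtain ⟨hji, hj⟩ := mem_erase.1 hj
          rw [if_pos (isPairTrace_insert_insert hP hji.symm hi (mem_filter.1 hj).2 hS), mul_one]
      _ ≤ _ := sum_le_univ_sum_of_nonneg (hterm i)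
  rw [setWeight, sum_mul]
  refine sum_le_sum fun i _ => ?_
  by_cases hi : i ∈ P
  · rw [Set.indicator_of_mem hi]
    exact hrow i hi
  · rw [Set.indicator_of_notMem hi, zero_mul]
    exact sum_nonneg fun j _ => hterm i j

lemma HasSparseSupports.exists_net_of_le_half (h : HasSparseSupports K 𝒜) {q : I → ℝ}
    (h0 : ∀ i, 0 ≤ q i) (hq : ∀ i, q i ≤ 1 / 2) {l b : ℝ} (hl : 0 < l) (hql : ∑ i, q i ≤ l)
    (hb : 1 / 2 ≤ b) (hlb : 4 * K * l < b * (b - 1 / 2)) :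
    ∃ S : Finset I, #S ≤ 2 * l ∧ ∀ P ∈ 𝒜, b ≤ setWeight q P → ∃ i ∈ S, i ∈ P := by
  classical
  set C := b * (b - 1 / 2) with hC
  have hC0 : 0 < C := lt_of_le_of_lt (by positivity) hlb
  have h1 (i : I) : q i ≤ 1 := (hq i).trans (by norm_num)
  have hexp : bernoulliExp q ((2 * l) • pairTraceWeight 𝒜 q + C • fun S => (#S : ℝ)) <
      2 * l * C := by
    rw [map_add, map_smul, map_smul, bernoulliExp_card, smul_eq_mul, smul_eq_mul]
    have hK : (2 * K : ℝ) * ∑ i, q i ≤ 2 * K * l := mul_le_mul_of_nonneg_left hql (by positivity)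
    nlinarith [h.bernoulliExp_pairTraceWeight_le h0 h1]
  obtain ⟨S, hS⟩ := exists_lt_of_bernoulliExp_lt h0 h1 hexp
  simp only [Pi.add_apply, Pi.smul_apply, smul_eq_mul] at hS
  have hW := pairTraceWeight_nonneg (𝒜 := 𝒜) h0 S
  refine ⟨S, ?_, fun P hP hbP => ?_⟩
  · refine le_of_mul_le_mul_left (le_of_lt (lt_of_le_of_lt ?_ (hS.trans_eq (mul_comm ..)))) hC0
    exact le_add_of_nonneg_left (by positivity)
  by_contra! hmiss
  have hCW : C ≤ pairTraceWeight 𝒜 q S :=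
    (mul_le_mul hbP (by linarith) (by linarith) (by linarith)).trans
      (setWeight_mul_sub_le_pairTraceWeight h0 hq hP hmiss)
  have : 0 ≤ C * (#S : ℝ) := by positivity
  nlinarith

lemma exists_card_le_forall_notMem_le_half {ρ : I → ℝ} (h0 : ∀ i, 0 ≤ ρ i) {l : ℝ}
    (hl : ∑ i, ρ i ≤ l) : ∃ T : Finset I, #T ≤ 2 * l ∧ ∀ i ∉ T, ρ i ≤ 1 / 2 := by
  classical
  let T : Finset I := {i | 1 / 2 < ρ i}
  refine ⟨T, ?_, fun i hi => not_lt.1 fun h => hi (mem_filter.2 ⟨mem_univ i, h⟩)⟩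
  have hcard := card_nsmul_le_sum T ρ (1 / 2) fun i hi => (mem_filter.1 hi).2.le
  rw [nsmul_eq_mul] at hcard
  linarith [sum_le_univ_sum_of_nonneg (s := T) h0]

lemma HasSparseSupports.exists_net (h : HasSparseSupports K 𝒜) {μ : I → ℝ} (h0 : ∀ i, 0 ≤ μ i)
    {m δ : ℝ} (hm : 0 < m) (hμm : ∑ i, μ i ≤ m) (hδ : 0 < δ) (hδ1 : δ ≤ 1) :
    ∃ T : Finset I, #T ≤ 4 * (4 * K + 1) / δ ^ 2 ∧
      ∀ P ∈ 𝒜, δ * m ≤ setWeight μ P → ∃ i ∈ T, i ∈ P := by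
  classical
  set l : ℝ := (4 * K + 1) / δ ^ 2
  have hlδ : l * δ ^ 2 = 4 * K + 1 := div_mul_cancel₀ _ (by positivity)
  have hl0 : 0 < l := by positivity
  have hlδ1 : 1 ≤ l * δ := by nlinarith [mul_pos hl0 hδ, K.cast_nonneg (α := ℝ)]
  let ρ : I → ℝ := fun i => l / m * μ i
  have hρ0 (i : I) : 0 ≤ ρ i := mul_nonneg (by positivity) (h0 i)
  have hρl : ∑ i, ρ i ≤ l := by
    rw [← mul_sum, div_mul_eq_mul_div, div_le_iff₀ hm]
    exact mul_le_mul_of_nonneg_left hμm hl0.le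
  obtain ⟨T₀, hT₀, hlight⟩ := exists_card_le_forall_notMem_le_half hρ0 hρl
  let q : I → ℝ := fun i => if i ∈ T₀ then 0 else ρ i
  have hq0 (i : I) : 0 ≤ q i := by dsimp only [q]; split_ifs <;> [exact le_rfl; exact hρ0 i]
  have hqρ (i : I) : q i ≤ ρ i := by dsimp only [q]; split_ifs <;> [exact hρ0 i; exact le_rfl]
  have hqhalf (i : I) : q i ≤ 1 / 2 := by
    dsimp only [q]; split_ifs with hi <;> [norm_num; exact hlight i hi]
  obtain ⟨S, hS, hnet⟩ := h.exists_net_of_le_half hq0 hqhalf hl0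
    ((sum_le_sum fun i _ => hqρ i).trans hρl) (b := l * δ) (by linarith) (by nlinarith)
  refine ⟨T₀ ∪ S, ?_, fun P hP hδP => ?_⟩
  · have hcard : (#(T₀ ∪ S) : ℝ) ≤ #T₀ + #S := by exact_mod_cast card_union_le T₀ S
    rw [mul_div_assoc]
    linarith
  by_contra! hmiss
  obtain ⟨i, hi, hiP⟩ := hnet P hP <| by
    calc l * δ = l / m * (δ * m) := by field_simp
      _ ≤ l / m * setWeight μ P := mul_le_mul_of_nonneg_left hδP (by positivity)
      _ = setWeight ρ P := (setWeight_const_mul _).symm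
      _ ≤ setWeight q P := setWeight_mono fun i hi =>
        (if_neg fun hiT => hmiss i (mem_union_left _ hiT) hi).ge
  exact hmiss i (mem_union_right _ hi) hiP

lemma HasSparseSupports.exists_net_inter (h : HasSparseSupports K 𝒜) {μ : I → ℝ}
    (h0 : ∀ i, 0 ≤ μ i) {Q : Set I} {m δ : ℝ} (hm : 0 < m) (hQ : setWeight μ Q ≤ m) (hδ : 0 < δ)
    (hδ1 : δ ≤ 1) :
    ∃ T : Finset I, #T ≤ 4 * (4 * K + 1) / δ ^ 2 ∧
      ∀ P ∈ 𝒜, δ * m ≤ setWeight μ (Q ∩ P) → ∃ i ∈ T, i ∈ P := by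
  obtain ⟨T, hT, hnet⟩ := h.exists_net (μ := Q.indicator μ)
    (fun i => Set.indicator_nonneg (fun i _ => h0 i) i) hm hQ hδ hδ1
  refine ⟨T, hT, fun P hP hle => hnet P hP ?_⟩
  rwa [setWeight, Set.indicator_indicator, Set.inter_comm]

end Nets

/-! ### From fractional to integral transversals -/

section Minimax

open Matrix

variable {I V : Type*} [Fintype I] [Fintype V]

lemma exists_stdSimplex_vecMul_le_le_mulVec [Nonempty I] [Nonempty V] (A : Matrix I V ℝ) :
    ∃ w ∈ stdSimplex ℝ I, ∃ μ ∈ stdSimplex ℝ V, ∃ v,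
      (∀ x, (w ᵥ* A) x ≤ v) ∧ ∀ i, v ≤ (A *ᵥ μ) i := by
  classical
  let f : (I → ℝ) →ₗ[ℝ] (V → ℝ) →ₗ[ℝ] ℝ := Matrix.toLinearMap₂' ℝ A
  obtain ⟨w, hw, μ, hμ, hsaddle⟩ := Sion.exists_isSaddlePointOn (f := fun w μ => f w μ)
    (Set.nonempty_coe_sort.1 inferInstance) (convex_stdSimplex ℝ I) (isCompact_stdSimplex ℝ I)
    (fun μ _ =>
      (f.flip μ).continuous_of_finiteDimensional.lowerSemicontinuous.lowerSemicontinuousOn _)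
    (fun μ _ => ((f.flip μ).convexOn (convex_stdSimplex ℝ I)).quasiconvexOn)
    (convex_stdSimplex ℝ V) (Set.nonempty_coe_sort.1 inferInstance) (isCompact_stdSimplex ℝ V)
    (fun w _ => (f w).continuous_of_finiteDimensional.upperSemicontinuous.upperSemicontinuousOn _)
    (fun w _ => ((f w).concaveOn (convex_stdSimplex ℝ V)).quasiconcaveOn)
  refine ⟨w, hw, μ, hμ, f w μ, fun x => ?_, fun i => ?_⟩
  · refine le_of_eq_of_le ?_ (hsaddle w hw _ (single_mem_stdSimplex ℝ x))
    simp only [f, Matrix.toLinearMap₂'_apply', mulVec_single_one]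
    rfl
  · refine (hsaddle _ (single_mem_stdSimplex ℝ i) μ hμ).trans_eq ?_
    simp [f, Matrix.toLinearMap₂'_apply']

end Minimax

section Transversals

variable {I V : Type*} {B : I → Set V} {K : ℕ}

/-- The system dual to `B`: the sets of indices `{i | x ∈ B i}`. -/
def dualSystem (B : I → Set V) : Set (Set I) :=
  Set.range fun x => {i | x ∈ B i}

open Classical in
lemma two_mul_card_le_of_preconnected_induce {W : Type*} [Fintype W] {H : SimpleGraph W}
    {s : Set W} (hs : (H.induce s).Preconnected) :
    2 * #{i | i ∈ s} ≤ 2 + #{d : H.Dart | d.fst ∈ s ∧ d.snd ∈ s} := by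
  obtain rfl | hne := s.eq_empty_or_nonempty
  · simp
  have : Nonempty s := hne.to_subtype
  have hconn : (H.induce s).Connected := ⟨hs⟩
  have hcard := hconn.card_vert_le_card_edgeSet_add_one
  have hdart : Fintype.card (H.induce s).Dart ≤ #{d : H.Dart | d.fst ∈ s ∧ d.snd ∈ s} := by
    refine card_le_card_of_injOn (fun d => ⟨(d.fst, d.snd), d.adj⟩)
      (fun d _ => mem_filter.2 ⟨mem_univ _, d.fst.2, d.snd.2⟩) fun d _ e _ hde => ?_
    simpa only [SimpleGraph.Dart.ext_iff, Prod.ext_iff, Subtype.ext_iff] using hde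
  rw [SimpleGraph.dart_card_eq_twice_card_edges, SimpleGraph.edgeFinset_card,
    ← Nat.card_eq_fintype_card] at hdart
  rw [Nat.card_eq_fintype_card, Fintype.card_subtype] at hcard
  omega

variable [Fintype V]

open Classical in
lemma sum_setWeight_eq (B : I → Set V) (μ : V → ℝ) (s : Finset I) :
    ∑ i ∈ s, setWeight μ (B i) = ∑ x, μ x * #{i ∈ s | x ∈ B i} := by
  simp only [setWeight]
  rw [sum_comm]
  refine sum_congr rfl fun x _ => ?_
  simp only [Set.indicator_apply]
  rw [← sum_filter, sum_const, nsmul_eq_mul, mul_comm]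

lemma HasSparseSupports.sum_setWeight_le (hdual : HasSparseSupports K (dualSystem B))
    {μ : V → ℝ} (hμ : ∀ x, 0 ≤ μ x) {R : Finset I} {a : ℝ}
    (hR : (R : Set I).Pairwise fun i j => setWeight μ (B i ∩ B j) ≤ a) (ha : 0 ≤ a) :
    ∑ i ∈ R, setWeight μ (B i) ≤ ∑ x, μ x + K * #R * a := by
  classical
  obtain ⟨H, hK, hH⟩ := hdual R
  have hpoint (x : V) : 2 * #{i : R | x ∈ B i} ≤
      2 + #{d : H.Dart | x ∈ B d.fst ∩ B d.snd} :=
    two_mul_card_le_of_preconnected_induce (hH _ ⟨x, rfl⟩)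
  have hdarts : ∑ d : H.Dart, setWeight μ (B d.fst ∩ B d.snd) ≤ 2 * (K * #R) * a := by
    calc ∑ d : H.Dart, setWeight μ (B d.fst ∩ B d.snd)
        ≤ Fintype.card H.Dart * a := by
          rw [← nsmul_eq_mul]
          exact sum_le_card_nsmul _ _ _ fun d _ =>
            hR d.fst.2 d.snd.2 fun h => H.ne_of_adj d.adj (Subtype.ext h)
      _ ≤ 2 * (K * #R) * a := by
          refine mul_le_mul_of_nonneg_right ?_ ha
          rw [H.dart_card_eq_twice_card_edges, SimpleGraph.edgeFinset_card,
            ← Nat.card_eq_fintype_card]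
          exact_mod_cast Nat.mul_le_mul_left 2 hK
  have htwo : 2 * ∑ i ∈ R, setWeight μ (B i) ≤
      2 * ∑ x, μ x + ∑ d : H.Dart, setWeight μ (B d.fst ∩ B d.snd) := by
    rw [← sum_coe_sort, sum_setWeight_eq (fun i : R => B i),
      sum_setWeight_eq fun d : H.Dart => B d.fst ∩ B d.snd, mul_sum, mul_sum, ← sum_add_distrib]
    refine sum_le_sum fun x _ => ?_
    rw [mul_left_comm, mul_comm 2 (μ x), ← mul_add]
    refine mul_le_mul_of_nonneg_left ?_ (hμ x)
    exact_mod_cast (by convert hpoint x)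
  linarith

lemma HasSparseSupports.card_le_of_pairwise_setWeight_inter_le
    (hdual : HasSparseSupports K (dualSystem B)) {μ : V → ℝ} (hμ : ∀ x, 0 ≤ μ x)
    (hμ1 : ∑ x, μ x ≤ 1) {R : Finset I} {a ε : ℝ} (ha : 0 ≤ a) (hε : 0 < ε)
    (haε : 2 * K * a ≤ ε) (hR : (R : Set I).Pairwise fun i j => setWeight μ (B i ∩ B j) ≤ a)
    (hRε : ∀ i ∈ R, ε ≤ setWeight μ (B i)) :
    #R ≤ 2 / ε := by
  have hlower : #R * ε ≤ ∑ i ∈ R, setWeight μ (B i) := by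
    rw [← nsmul_eq_mul]
    exact card_nsmul_le_sum _ _ _ hRε
  have hupper := hdual.sum_setWeight_le hμ hR ha
  have := mul_le_mul_of_nonneg_left haε (#R).cast_nonneg
  rw [le_div_iff₀ hε]
  linarith

lemma exists_pairwise_forall_exists_not (A : Finset I) {r : I → I → Prop}
    (hr : ∀ i j, r i j → r j i) :
    ∃ R ⊆ A, (R : Set I).Pairwise r ∧ ∀ j ∈ A, j ∉ R → ∃ i ∈ R, ¬ r i j := by
  classical
  induction A using Finset.induction_on with
  | empty => exact ⟨∅, Subset.rfl, by simp, by simp⟩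
  | insert a A _ ih =>
    obtain ⟨R, hRA, hR, hmax⟩ := ih
    by_cases ha : ∀ i ∈ R, r i a
    · refine ⟨insert a R, insert_subset_insert a hRA, ?_, fun j hj hjR => ?_⟩
      · rw [coe_insert]
        exact hR.insert fun i hi _ => ⟨hr _ _ (ha i hi), ha i hi⟩
      · rw [mem_insert, not_or] at hjR
        obtain ⟨i, hi, hij⟩ := hmax j ((mem_insert.1 hj).resolve_left hjR.1) hjR.2
        exact ⟨i, mem_insert_of_mem hi, hij⟩
    · push Not at ha
      refine ⟨R, hRA.trans (subset_insert a A), hR, fun j hj hjR => ?_⟩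
      obtain rfl | hj := mem_insert.1 hj
      · exact ha
      · exact hmax j hj hjR

/-- Linear programming duality, with the fractional matching `w` and the fractional transversal `μ`
both normalised to total weight `1`. -/
lemma exists_fractional_matching_transversal [Fintype I] [Nonempty I] [Nonempty V] (B : I → Set V) :
    ∃ w ∈ stdSimplex ℝ I, ∃ μ ∈ stdSimplex ℝ V, ∃ v,
      (∀ P ∈ dualSystem B, setWeight w P ≤ v) ∧ ∀ i, v ≤ setWeight μ (B i) := by
  classical
  obtain ⟨w, hw, μ, hμ, v, hwv, hμv⟩ :=
    exists_stdSimplex_vecMul_le_le_mulVec (Matrix.of fun i x => if x ∈ B i then (1 : ℝ) else 0)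
  refine ⟨w, hw, μ, hμ, v, ?_, fun i => (hμv i).trans_eq ?_⟩
  · rintro _ ⟨x, rfl⟩
    refine le_of_eq_of_le ?_ (hwv x)
    simp [setWeight, Matrix.vecMul, dotProduct, Set.indicator_apply]
  · simp [setWeight, Matrix.mulVec, dotProduct, Set.indicator_apply]

variable [Finite I]

/-- All sets of weight about `ε` are pierced by nets inside the members of a maximal subfamily with
small pairwise overlaps; sparse dual supports bound the size of that subfamily. -/
lemma HasSparseSupports.exists_transversal_of_band (hprimal : HasSparseSupports K (Set.range B))
    (hdual : HasSparseSupports K (dualSystem B)) {μ : V → ℝ} (hμ : ∀ x, 0 ≤ μ x)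
    (hμ1 : ∑ x, μ x ≤ 1) {ε : ℝ} (hε : 0 < ε) :
    ∃ T : Finset V, #T ≤ 128 * (4 * K + 1) * (K + 1) ^ 2 / ε ∧
      ∀ i, ε ≤ setWeight μ (B i) → setWeight μ (B i) < 2 * ε → ∃ x ∈ T, x ∈ B i := by
  classical
  cases nonempty_fintype I
  set δ : ℝ := 1 / (4 * (K + 1)) with hδ
  have hδ0 : 0 < δ := by positivity
  have hKδ : (K + 1) * δ = 1 / 4 := by rw [hδ]; field_simp
  have hδ1 : δ ≤ 1 / 4 := by nlinarith [K.cast_nonneg (α := ℝ)]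
  let A : Finset I := {i | ε ≤ setWeight μ (B i) ∧ setWeight μ (B i) < 2 * ε}
  have hA (i : I) (hi : i ∈ A) := (mem_filter.1 hi).2
  obtain ⟨R, hRA, hR, hmax⟩ := exists_pairwise_forall_exists_not A
    (r := fun i j => setWeight μ (B i ∩ B j) ≤ δ * (2 * ε)) fun i j h => by rwa [Set.inter_comm]
  have hRcard : #R ≤ 2 / ε :=
    hdual.card_le_of_pairwise_setWeight_inter_le hμ hμ1 (by positivity) hε (by nlinarith) hR
      fun i hi => (hA i (hRA hi)).1
  have hnets (i : I) (hi : i ∈ R) := hprimal.exists_net_inter hμ (Q := B i) (by positivity)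
    (hA i (hRA hi)).2.le hδ0 (by linarith)
  choose! N hN hnet using hnets
  refine ⟨R.biUnion N, ?_, fun j hj hj2 => ?_⟩
  · calc (#(R.biUnion N) : ℝ) ≤ ∑ i ∈ R, (#(N i) : ℝ) := by exact_mod_cast card_biUnion_le
      _ ≤ #R * (64 * (4 * K + 1) * (K + 1) ^ 2) := by
        rw [← nsmul_eq_mul]
        refine sum_le_card_nsmul _ _ _ fun i hi => (hN i hi).trans_eq ?_
        rw [hδ]
        field_simp
        ring
      _ ≤ 2 / ε * (64 * (4 * K + 1) * (K + 1) ^ 2) :=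
        mul_le_mul_of_nonneg_right hRcard (by positivity)
      _ = 128 * (4 * K + 1) * (K + 1) ^ 2 / ε := by ring
  · obtain ⟨i, hi, hij⟩ : ∃ i ∈ R, δ * (2 * ε) ≤ setWeight μ (B i ∩ B j) := by
      by_cases hjR : j ∈ R
      · refine ⟨j, hjR, ?_⟩
        rw [Set.inter_self]
        nlinarith
      · obtain ⟨i, hi, hij⟩ := hmax j (mem_filter.2 ⟨mem_univ j, hj, hj2⟩) hjR
        exact ⟨i, hi, (not_le.1 hij).le⟩
    obtain ⟨x, hx, hxj⟩ := hnet i hi (B j) ⟨j, rfl⟩ hij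
    exact ⟨x, mem_biUnion.2 ⟨i, hi, hx⟩, hxj⟩

/-- Rounding a fractional transversal: the weight bands `[ε, 2ε)`, `[2ε, 4ε)`, … contribute a
geometric series. -/
lemma HasSparseSupports.exists_transversal (hprimal : HasSparseSupports K (Set.range B))
    (hdual : HasSparseSupports K (dualSystem B)) {μ : V → ℝ} (hμ : ∀ x, 0 ≤ μ x)
    (hμ1 : ∑ x, μ x ≤ 1) {ε : ℝ} (hε : 0 < ε) :
    ∃ T : Finset V, #T ≤ 256 * (4 * K + 1) * (K + 1) ^ 2 / ε ∧
      ∀ i, ε ≤ setWeight μ (B i) → ∃ x ∈ T, x ∈ B i := by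
  classical
  obtain ⟨n, hn⟩ := pow_unbounded_of_one_lt (1 / ε) (one_lt_two (α := ℝ))
  rw [div_lt_iff₀ hε] at hn
  induction n generalizing ε with
  | zero =>
    refine ⟨∅, by rw [card_empty, Nat.cast_zero]; positivity, fun i hi => ?_⟩
    have : setWeight μ (B i) ≤ ∑ x, μ x :=
      sum_le_sum fun x _ => Set.indicator_le_self' (fun x _ => hμ x) x
    linarith
  | succ n ih =>
    obtain ⟨T₁, hT₁, hheavy⟩ := ih (ε := 2 * ε) (by positivity) (by rw [pow_succ] at hn; linarith)
    obtain ⟨T₂, hT₂, hband⟩ := hprimal.exists_transversal_of_band hdual hμ hμ1 hε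
    refine ⟨T₁ ∪ T₂, ?_, fun i hi => ?_⟩
    · calc (#(T₁ ∪ T₂) : ℝ) ≤ #T₁ + #T₂ := by exact_mod_cast card_union_le T₁ T₂
        _ ≤ 256 * (4 * K + 1) * (K + 1) ^ 2 / (2 * ε) + 128 * (4 * K + 1) * (K + 1) ^ 2 / ε :=
          add_le_add hT₁ hT₂
        _ = 256 * (4 * K + 1) * (K + 1) ^ 2 / ε := by field_simp; ring
    · rcases le_or_gt (2 * ε) (setWeight μ (B i)) with hbig | hsmall
      · exact (hheavy i hbig).imp fun x hx => ⟨mem_union_left _ hx.1, hx.2⟩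
      · exact (hband i hi hsmall).imp fun x hx => ⟨mem_union_right _ hx.1, hx.2⟩

end Transversals

section ErdosPosa

variable {I V : Type*} [Finite I] [Finite V] {B : I → Set V} {K : ℕ}

lemma HasSparseSupports.exists_transversal_card_le (hprimal : HasSparseSupports K (Set.range B))
    (hdual : HasSparseSupports K (dualSystem B)) (hB : ∀ i, (B i).Nonempty) :
    ∃ (T : Finset V) (M : Finset I), (∀ i, ∃ x ∈ T, x ∈ B i) ∧
      (M : Set I).Pairwise (fun i j => Disjoint (B i) (B j)) ∧
      #T ≤ 512 * (4 * K + 1) ^ 2 * (K + 1) ^ 2 * #M := by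
  cases nonempty_fintype I
  cases nonempty_fintype V
  cases isEmpty_or_nonempty I with
  | inl _ => exact ⟨∅, ∅, isEmptyElim, by simp, by simp⟩
  | inr hI =>
  have : Nonempty V := (hB hI.some).to_type
  obtain ⟨w, hw, μ, hμ, v, hwv, hμv⟩ := exists_fractional_matching_transversal B
  have hle (i : I) : w i ≤ v := by
    obtain ⟨x, hx⟩ := hB i
    exact (le_setWeight hw.1 (P := {i | x ∈ B i}) hx).trans (hwv _ ⟨x, rfl⟩)
  have hv : 0 < v := by
    obtain ⟨i, -, hi⟩ := exists_lt_of_sum_lt (s := univ) (f := 0) (g := w) (by simp [hw.2])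
    exact hi.trans_le (hle i)
  obtain ⟨T, hT, hTB⟩ := hprimal.exists_transversal hdual hμ.1 hμ.2.le hv
  obtain ⟨M, hM, hMw⟩ := hdual.exists_isIndepSet_primalGraph (p := fun i => 1 / (2 * v) * w i)
    (fun i => mul_nonneg (by positivity) (hw.1 i))
    (fun i => by rw [one_div_mul_eq_div, div_le_one (by positivity)]; linarith [hle i])
    (fun P hP => by
      rw [setWeight_const_mul, one_div_mul_eq_div, div_le_iff₀ (by positivity)]
      linarith [hwv P hP])
  rw [← mul_sum, hw.2, mul_one] at hMw
  refine ⟨T, M, fun i => hTB i (hμv i), fun i hi j hj hij => ?_, ?_⟩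
  · refine Set.disjoint_left.2 fun x hxi hxj => hM hi hj hij ?_
    exact ⟨hij, _, ⟨x, rfl⟩, hxi, hxj⟩
  · have : (#T : ℝ) ≤ 512 * (4 * K + 1) ^ 2 * (K + 1) ^ 2 * #M := by
      calc (#T : ℝ) ≤ 256 * (4 * K + 1) * (K + 1) ^ 2 / v := hT
        _ = 512 * (4 * K + 1) * (K + 1) ^ 2 * (1 / (2 * v)) := by field_simp; ring
        _ ≤ 512 * (4 * K + 1) * (K + 1) ^ 2 * ((4 * K + 1) * #M) :=
          mul_le_mul_of_nonneg_left hMw (by positivity)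
        _ = 512 * (4 * K + 1) ^ 2 * (K + 1) ^ 2 * #M := by ring
    exact_mod_cast this

end ErdosPosa

/-! ### Balls -/

section Balls

variable {V I : Type*} {G : SimpleGraph V} {t : ℕ}

lemma hasSparseSupports_range_gBall (hG : ¬ GraphMinor (⊤ : SimpleGraph (Fin t)) G)
    (c : I → V) (r : I → ℕ) :
    HasSparseSupports (2 ^ t) (Set.range fun i => G.gBall (c i) (r i)) := by
  intro S
  obtain ⟨H, hcard, hH⟩ := exists_sparse_support_of_not_graphMinor hG (c := ((↑) : S → V))
    (s := fun _ => 0) fun i k hik hreach => by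
      simpa using hreach.pos_dist_of_ne fun h => hik (Subtype.ext h)
  refine ⟨H, by simpa using hcard, ?_⟩
  rintro _ ⟨i, rfl⟩
  exact hH (c i) (r i)

/-- With the additive weights `R - r i`, the balls of radius `r i` containing `x` are those whose
weighted distance to `x` is at most `R`. -/
lemma hasSparseSupports_dualSystem_gBall (hG : ¬ GraphMinor (⊤ : SimpleGraph (Fin t)) G)
    {c : I → V} {r : I → ℕ}
    (hanti : ∀ i k, G.gBall (c i) (r i) ⊆ G.gBall (c k) (r k) → i = k) :
    HasSparseSupports (2 ^ t) (dualSystem fun i => G.gBall (c i) (r i)) := by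
  intro S
  have hrR (i : S) : r i ≤ S.sup r := le_sup i.2
  obtain ⟨H, hcard, hH⟩ := exists_sparse_support_of_not_graphMinor hG (c := fun i : S => c i)
    (s := fun i => S.sup r - r i) fun i k hik hreach => by
      by_contra! hle
      refine hik (Subtype.ext (hanti i k fun u hu => ⟨hreach.symm.trans hu.1, ?_⟩))
      have htri : G.dist (c k) u ≤ G.dist (c k) (c i) + G.dist (c i) u :=
        hreach.symm.dist_triangle_left u
      rw [SimpleGraph.dist_comm (u := c k) (v := c i)] at htri
      have := hu.2
      have := hrR i
      have := hrR k
      omega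
  refine ⟨H, by simpa using hcard, ?_⟩
  rintro _ ⟨x, rfl⟩
  have hball : {i : S | x ∈ G.gBall (c i) (r i)} =
      {i : S | G.Reachable x (c i) ∧ G.dist x (c i) + (S.sup r - r i) ≤ S.sup r} := by
    ext i
    have := hrR i
    simp only [Set.mem_ofPred_eq, G.dist_comm (u := x)]
    exact and_congr ⟨fun h => h.symm, fun h => h.symm⟩ (by omega)
  change (H.induce {i : S | x ∈ G.gBall (c i) (r i)}).Preconnected
  rw [hball]
  exact hH x (S.sup r)

end Balls

section Numbers

variable {V : Type*} [Fintype V] {E : Set (Set V)}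

lemma card_le_matchingNumber {M : Finset (Set V)} (hM : (M : Set (Set V)) ⊆ E)
    (hd : (M : Set (Set V)).Pairwise Disjoint) : #M ≤ matchingNumber E := by
  classical
  refine le_csSup ⟨Fintype.card (Set V), ?_⟩ ⟨M, hM, hd, rfl⟩
  rintro _ ⟨N, -, -, rfl⟩
  exact card_le_univ N

lemma transversalNumber_le_card {T : Finset V} (hT : ∀ e ∈ E, ∃ v ∈ T, v ∈ e) :
    transversalNumber E ≤ #T :=
  Nat.sInf_le ⟨T, hT, rfl⟩

end Numbers

theorem tau_le_const_mul_nu_of_Kt_minor_free_general {V : Type*} [Fintype V] {G : SimpleGraph V}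
    {E : Set (Set V)} {t : ℕ} (hG : ¬ GraphMinor (⊤ : SimpleGraph (Fin t)) G)
    (hE : IsBallHypergraph G E) :
    transversalNumber E ≤ 512 * (4 * 2 ^ t + 1) ^ 2 * (2 ^ t + 1) ^ 2 * matchingNumber E := by
  let I : Type _ := {e : Set V // Minimal (· ∈ E) e}
  choose c r hcr using fun i : I => hE i i.2.prop
  have hball : (fun i : I => (i : Set V)) = fun i => G.gBall (c i) (r i) := funext hcr
  have hne (i : I) : (i : Set V).Nonempty :=
    ⟨c i, (hcr i).symm ▸ ⟨SimpleGraph.Reachable.refl _, by simp⟩⟩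
  have hprimal : HasSparseSupports (2 ^ t) (Set.range fun i : I => (i : Set V)) :=
    hball ▸ hasSparseSupports_range_gBall hG c r
  have hdual : HasSparseSupports (2 ^ t) (dualSystem fun i : I => (i : Set V)) :=
    hball ▸ hasSparseSupports_dualSystem_gBall hG fun i k h =>
      Subtype.ext (k.2.eq_of_subset i.2.prop (by rwa [hcr i, hcr k]))
  obtain ⟨T, M, hT, hM, hTM⟩ := hprimal.exists_transversal_card_le hdual hne
  have hTE : ∀ e ∈ E, ∃ x ∈ T, x ∈ e := fun e he => by
    obtain ⟨m, hme, hm⟩ := (Set.toFinite E).exists_le_minimal he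
    exact (hT ⟨m, hm⟩).imp fun x hx => ⟨hx.1, hme hx.2⟩
  have hMν : #M ≤ matchingNumber E := by
    rw [← card_map (Function.Embedding.subtype _)]
    refine card_le_matchingNumber ?_ ?_
    · rw [coe_map]
      rintro _ ⟨i, -, rfl⟩
      exact i.2.prop
    · rw [coe_map]
      exact Set.InjOn.pairwise_image (Subtype.val_injective.injOn) |>.2 hM
  calc transversalNumber E ≤ #T := transversalNumber_le_card hTE
    _ ≤ 512 * (4 * 2 ^ t + 1) ^ 2 * (2 ^ t + 1) ^ 2 * #M := by exact_mod_cast hTM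
    _ ≤ _ := Nat.mul_le_mul_left _ hMν

/-- **Main result.** For every integer `t ≥ 1` there is a constant `c_t` such that
`τ(𝓗) ≤ c_t · ν(𝓗)` for every `K_t`-minor-free graph `G` and every ball hypergraph
`𝓗` of `G`. -/
theorem tau_le_const_mul_nu_of_Kt_minor_free :
    ∀ t : ℕ, 1 ≤ t → ∃ c : ℕ,
      ∀ (V : Type) [Fintype V] (G : SimpleGraph V) (E : Set (Set V)),
        ¬ GraphMinor (⊤ : SimpleGraph (Fin t)) G →
        IsBallHypergraph G E →
        transversalNumber E ≤ c * matchingNumber E := by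
  exact fun t _ => ⟨_, fun V _ G E hG hE => tau_le_const_mul_nu_of_Kt_minor_free_general hG hE⟩
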